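/- For every real number q with 0 < q < 1, ∫_0^q ∏_{j=1}^∞ (1−t^{3j})^{10} / (1−t^j)^6 dt = q ∏_{j=1}^∞ (1−q^{9j})^3 / (1−q^j)^3. Moreover this common value equals 1/(3√3) when q = e^{−2π/3}. -/

import Mathlib

open Real

/-- The integrand `∏_{j=1}^∞ (1−t^{3j})^{10} / (1−t^j)^6`. -/
noncomputable def U5 (t : ℝ) : ℝ :=
  ∏' j : ℕ, (1 - t ^ (3 * (j + 1))) ^ 10 / (1 - t ^ (j + 1)) ^ 6

/-- The antiderivative `q ∏_{j=1}^∞ (1−q^{9j})^3 / (1−q^j)^3`. -/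
noncomputable def V5 (q : ℝ) : ℝ :=
  q * ∏' j : ℕ, (1 - q ^ (9 * (j + 1))) ^ 3 / (1 - q ^ (j + 1)) ^ 3

open Filter Topology

/-- q-Pochhammer -/
noncomputable def qp (Q : ℂ) (n : ℕ) : ℂ := ∏ k ∈ Finset.range n, (1 - Q ^ (k+1))

/-- Gaussian binomials -/
noncomputable def qb (Q : ℂ) : ℕ → ℕ → ℂ
  | _, 0 => 1
  | 0, _+1 => 0
  | M+1, j+1 => qb Q M j + Q^(j+1) * qb Q M (j+1)

lemma qb_zero_right (Q : ℂ) (M : ℕ) : qb Q M 0 = 1 := by cases M <;> simp [qb]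

lemma qb_of_lt (Q : ℂ) : ∀ M j : ℕ, M < j → qb Q M j = 0
  | _, 0, h => by omega
  | 0, j+1, h => by simp [qb]
  | M+1, j+1, h => by
    rw [qb, qb_of_lt Q M j (by omega), qb_of_lt Q M (j+1) (by omega)]; simp

lemma qb_mul (Q : ℂ) : ∀ s a b : ℕ, a + b = s → qb Q (a+b) a * (qp Q a * qp Q b) = qp Q (a+b)
  | s, 0, b, h => by simp [qb_zero_right, qp]
  | s, a+1, 0, h => by
    cases s with
    | zero => omega
    | succ s =>
      have h1 := qb_mul Q s a 0 (by omega)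
      simp only [Nat.add_zero] at h1 ⊢
      rw [qb, qb_of_lt Q a (a+1) (by omega)]
      simp only [qp, Finset.prod_range_succ, Finset.range_zero, Finset.prod_empty] at h1 ⊢
      linear_combination (1 - Q^(a+1)) * h1
  | s, a+1, b+1, h => by
    cases s with
    | zero => omega
    | succ s =>
      have h1 := qb_mul Q s a (b+1) (by omega)
      have h2 := qb_mul Q s (a+1) b (by omega)
      rw [show a + 1 + (b+1) = (a + (b+1)) + 1 by ring, qb]
      rw [show a + 1 + b = a + (b+1) by ring] at h2
      have e1 : qp Q (a+1) = qp Q a * (1 - Q^(a+1)) := Finset.prod_range_succ _ _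
      have e2 : qp Q (b+1) = qp Q b * (1 - Q^(b+1)) := Finset.prod_range_succ _ _
      have e3 : qp Q (a+(b+1)+1) = qp Q (a+(b+1)) * (1 - Q^(a+(b+1)+1)) := Finset.prod_range_succ _ _
      rw [e1] at h2 ⊢
      rw [e2] at h1 ⊢
      rw [e3]
      linear_combination (1 - Q^(a+1)) * h1 + Q^(a+1) * (1 - Q^(b+1)) * h2

lemma qbinom (p : ℂ) (M : ℕ) : ∀ z : ℂ, ∏ k ∈ Finset.range M, (1 + z * p^(2*k+1)) =
    ∑ j ∈ Finset.range (M+1), qb (p^2) M j * p^(j^2) * z^j := by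
  induction M with
  | zero => intro z; simp [qb]
  | succ M ih =>
    intro z
    rw [Finset.prod_range_succ']
    have : ∀ k, 1 + z * p^(2*(k+1)+1) = 1 + (z*p^2) * p^(2*k+1) := by intro k; ring
    simp only [this, ih]
    rw [Finset.sum_range_succ' _ (M+1)]
    have : ∀ j, qb (p^2) (M+1) (j+1) * p^((j+1)^2) * z^(j+1) =
      (z * p) * (qb (p^2) M j * p^(j^2) * (z*p^2)^j) +
       qb (p^2) M (j+1) * p^((j+1)^2) * (z*p^2)^(j+1) := by
      intro j; rw [qb]; ring
    simp only [this, Finset.sum_add_distrib, ← Finset.mul_sum]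
    have h2 := Finset.sum_range_succ' (fun j => qb (p^2) M j * p^(j^2) * (z*p^2)^j) (M+1)
    rw [Finset.sum_range_succ, qb_of_lt _ M (M+1) (by omega)] at h2
    simp only [qb_zero_right] at h2 ⊢
    linear_combination h2

lemma finite_jtp (p z : ℂ) (hp : p ≠ 0) (hz : z ≠ 0) (N : ℕ) :
    (∏ k ∈ Finset.range N, (1 + z * p^(2*k+1))) * (∏ k ∈ Finset.range N, (1 + z⁻¹ * p^(2*k+1))) =
    ∑' n : ℤ, (if -(N:ℤ) ≤ n then qb (p^2) (2*N) (N+n).toNat else 0) * (p^(n^2) * z^n) := by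
  rw [tsum_eq_sum (s := Finset.Icc (-(N:ℤ)) N)]
  · have h1 := qbinom p (2*N) (z * (p^(2*N))⁻¹)
    rw [two_mul, Finset.prod_range_add, ← Finset.prod_range_reflect, ← two_mul] at h1
    have h2 : ∀ k ∈ Finset.range N, 1 + z * (p^(2*N))⁻¹ * p^(2*(N-1-k)+1) =
        (z * (p^(2*k+1))⁻¹) * (1 + z⁻¹ * p^(2*k+1)) := by
      intro k hk
      have hk := Finset.mem_range.1 hk
      obtain ⟨d, rfl⟩ : ∃ d, N = k + d + 1 := ⟨N - k - 1, by omega⟩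
      rw [show k + d + 1 - 1 - k = d by omega]
      field_simp
      ring
    have h3 : ∀ k, 1 + z * (p^(2*N))⁻¹ * p^(2*(N+k)+1) = 1 + z * p^(2*k+1) := by
      intro k; field_simp; ring
    have h4 : ∏ k ∈ Finset.range N, (z * (p^(2*k+1))⁻¹) = z^N * (p^(N^2))⁻¹ := by
      clear h1 h2 h3
      induction N with
      | zero => simp
      | succ N ih => rw [Finset.prod_range_succ, ih]; field_simp; ring
    rw [Finset.prod_congr rfl h2, Finset.prod_mul_distrib, h4] at h1
    simp only [h3] at h1
    have h5 : z^N * (p^(N^2))⁻¹ ≠ 0 := by simp [hz, hp]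
    apply mul_left_cancel₀ h5
    rw [mul_comm (∏ k ∈ Finset.range N, (1 + z * p^(2*k+1))), ← mul_assoc, h1, Finset.mul_sum]
    refine Finset.sum_bij (fun j _ => (j:ℤ) - N) ?_ ?_ ?_ ?_
    · intro j hj; simp at hj ⊢; omega
    · intro a _ b _ h; simpa using h
    · intro n hn; simp at hn; exact ⟨(n+N).toNat, by simp; omega, by simp; omega⟩
    · intro j hj
      rw [if_pos (by omega), show ((N:ℤ) + (j - N)).toNat = j by omega, zpow_sub₀ hz,
        show ((j:ℤ)-N)^2 = (j^2 + N^2 : ℕ) - (2*N*j : ℕ) by push_cast; ring, zpow_sub₀ hp]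
      simp only [zpow_natCast]
      rw [mul_pow, inv_pow, ← pow_mul]
      field_simp
      ring
  · intro n hn
    simp only [Finset.mem_Icc, not_and, not_le] at hn
    split_ifs with h
    · rw [qb_of_lt _ _ _ (by have := hn h; omega)]; simp
    · simp

lemma summable_theta (p z : ℂ) (hp0 : p ≠ 0) (hp : ‖p‖ < 1) (hz : z ≠ 0) :
    Summable fun n : ℤ => p^(n^2) * z^n := by
  have hpi : (π:ℂ) * Complex.I ≠ 0 := by simp [Real.pi_ne_zero]
  have := (summable_jacobiTheta₂_term_iff (Complex.log z / (2 * π * Complex.I))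
    (Complex.log p / (π * Complex.I))).2 (by
      have : Complex.log p / (π * Complex.I) = ((π:ℝ):ℂ)⁻¹ * (-Complex.I * Complex.log p) := by
        field_simp; simp
      rw [this, ← Complex.ofReal_inv, Complex.im_ofReal_mul]
      simp only [neg_mul, Complex.neg_im, Complex.mul_im, Complex.I_re, Complex.I_im, Complex.log_re]
      have := Real.log_neg (norm_pos_iff.2 hp0) hp
      have := Real.pi_pos
      have h2 : 0 < (π)⁻¹ := by positivity
      nlinarith)
  refine this.congr fun n => ?_
  rw [jacobiTheta₂_term]
  have e1 : p^(n^2) = Complex.exp ((n:ℂ)^2 * Complex.log p) := by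
    rw [show ((n:ℂ)^2) = ((n^2 : ℤ) : ℂ) by push_cast; ring, Complex.exp_int_mul, Complex.exp_log hp0]
  have e2 : z^n = Complex.exp (n * Complex.log z) := by
    rw [Complex.exp_int_mul, Complex.exp_log hz]
  rw [e1, e2, ← Complex.exp_add]
  congr 1
  field_simp
  ring


noncomputable def qA (Q x : ℂ) : ℂ := ∏' n : ℕ, (1 - x * Q^n)

lemma summable_norm_xQ (Q x : ℂ) (hQ : ‖Q‖ < 1) : Summable fun n : ℕ => ‖-(x * Q^n)‖ := by
  simp only [norm_neg, norm_mul, norm_pow]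
  exact (summable_geometric_of_lt_one (norm_nonneg _) hQ).mul_left _

lemma mult_qA (Q x : ℂ) (hQ : ‖Q‖ < 1) : Multipliable fun n : ℕ => 1 - x * Q^n := by
  simpa [sub_eq_add_neg] using multipliable_one_add_of_summable (summable_norm_xQ Q x hQ)

lemma tendsto_qA (Q x : ℂ) (hQ : ‖Q‖ < 1) :
    Tendsto (fun N => ∏ k ∈ Finset.range N, (1 - x * Q^k)) atTop (𝓝 (qA Q x)) :=
  (mult_qA Q x hQ).hasProd.tendsto_prod_nat

lemma qA_ne_zero (Q x : ℂ) (hQ : ‖Q‖ < 1) (h : ∀ n : ℕ, 1 - x * Q^n ≠ 0) : qA Q x ≠ 0 := by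
  have := tprod_one_add_ne_zero_of_summable (f := fun n : ℕ => -(x * Q^n))
    (fun i => by simpa [sub_eq_add_neg] using h i) (summable_norm_xQ Q x hQ)
  simpa [qA, sub_eq_add_neg] using this

lemma one_sub_pow_ne (Q : ℂ) (hQ : ‖Q‖ < 1) (k : ℕ) : 1 - Q^(k+1) ≠ 0 := by
  intro h
  have h1 : ‖Q^(k+1)‖ < 1 := by
    rw [norm_pow]; exact pow_lt_one₀ (norm_nonneg _) hQ (by omega)
  rw [← sub_eq_zero.1 h] at h1; simp at h1

lemma qp_ne (Q : ℂ) (hQ : ‖Q‖ < 1) (n : ℕ) : qp Q n ≠ 0 :=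
  Finset.prod_ne_zero_iff.2 fun k _ => one_sub_pow_ne Q hQ k

lemma tendsto_qp (Q : ℂ) (hQ : ‖Q‖ < 1) : Tendsto (qp Q) atTop (𝓝 (qA Q Q)) := by
  refine (tendsto_qA Q Q hQ).congr fun N => ?_
  exact Finset.prod_congr rfl fun k _ => by rw [pow_succ']

lemma qA_self_ne (Q : ℂ) (hQ : ‖Q‖ < 1) : qA Q Q ≠ 0 :=
  qA_ne_zero Q Q hQ fun n => by rw [← pow_succ']; exact one_sub_pow_ne Q hQ n

noncomputable def th (p z : ℂ) : ℂ := ∑' n : ℤ, p^(n^2) * z^n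

lemma jtp (p z : ℂ) (hp0 : p ≠ 0) (hp : ‖p‖ < 1) (hz : z ≠ 0) :
    th p z = qA (p^2) (p^2) * (qA (p^2) (-z*p) * qA (p^2) (-z⁻¹*p)) := by
  have hQ : ‖p^2‖ < 1 := by rw [norm_pow]; exact pow_lt_one₀ (norm_nonneg _) hp (by omega)
  set Q := p^2 with hQd
  have hb : ∀ N : ℕ, ∀ n : ℤ, -(N:ℤ) ≤ n → n ≤ N →
      qb Q (2*N) (N+n).toNat = qp Q (2*N) * ((qp Q (N+n).toNat)⁻¹ * (qp Q (N-n).toNat)⁻¹) := by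
    intro N n h1 h2
    have := qb_mul Q _ (N+n).toNat (N-n).toNat rfl
    rw [show (N+n).toNat + (N-n).toNat = 2*N by omega] at this
    rw [← this]
    have := qp_ne Q hQ (N+n).toNat
    have := qp_ne Q hQ (N-n).toNat
    field_simp
  have hT := tendsto_qp Q hQ
  have hTi : Tendsto (fun n => (qp Q n)⁻¹) atTop (𝓝 (qA Q Q)⁻¹) := hT.inv₀ (qA_self_ne Q hQ)
  obtain ⟨C, hC⟩ := (Metric.isBounded_range_of_tendsto _ hT).exists_norm_le
  obtain ⟨D, hD⟩ := (Metric.isBounded_range_of_tendsto _ hTi).exists_norm_le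
  have hC' : ∀ n, ‖qp Q n‖ ≤ C := fun n => hC _ ⟨n, rfl⟩
  have hD' : ∀ n, ‖(qp Q n)⁻¹‖ ≤ D := fun n => hD _ ⟨n, rfl⟩
  have hC0 : 0 ≤ C := (norm_nonneg _).trans (hC' 0)
  have hD0 : 0 ≤ D := (norm_nonneg _).trans (hD' 0)
  have key := tendsto_tsum_of_dominated_convergence (𝓕 := atTop)
    (f := fun (N:ℕ) (n:ℤ) => (if -(N:ℤ) ≤ n then qb Q (2*N) (N+n).toNat else 0) * (p^(n^2) * z^n))
    (g := fun n => (qA Q Q)⁻¹ * (p^(n^2) * z^n)) (bound := fun n => (C * (D * D)) * ‖p^(n^2) * z^n‖)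
    ((summable_theta p z hp0 hp hz).norm.mul_left _) ?_ ?_
  · simp only [hQd, ← finite_jtp p z hp0 hz] at key
    rw [tsum_mul_left] at key
    have h1 := (tendsto_qA Q (-z*p) hQ).mul (tendsto_qA Q (-z⁻¹*p) hQ)
    have h2 := tendsto_nhds_unique key (h1.congr fun N => by
      congr 1 <;> refine Finset.prod_congr rfl fun k _ => ?_ <;> rw [hQd] <;> ring)
    rw [← h2, th, ← mul_assoc, mul_inv_cancel₀ (qA_self_ne Q hQ), one_mul]
  · intro n
    refine Tendsto.mul_const _ ?_
    have t1 : Tendsto (fun N : ℕ => (N+n).toNat) atTop atTop :=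
      tendsto_atTop.2 fun b => by filter_upwards [eventually_ge_atTop (b + n.natAbs)] with N hN; omega
    have t2 : Tendsto (fun N : ℕ => (N-n).toNat) atTop atTop :=
      tendsto_atTop.2 fun b => by filter_upwards [eventually_ge_atTop (b + n.natAbs)] with N hN; omega
    have t3 : Tendsto (fun N : ℕ => 2*N) atTop atTop :=
      tendsto_atTop.2 fun b => by filter_upwards [eventually_ge_atTop b] with N hN; omega
    have := (hT.comp t3).mul ((hTi.comp t1).mul (hTi.comp t2))
    rw [← mul_assoc, mul_inv_cancel₀ (qA_self_ne Q hQ), one_mul] at this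
    refine this.congr' ?_
    filter_upwards [eventually_ge_atTop n.natAbs] with N hN
    rw [if_pos (by omega), hb N n (by omega) (by omega)]
    rfl
  · refine Eventually.of_forall fun N n => ?_
    rw [norm_mul]
    refine mul_le_mul_of_nonneg_right ?_ (norm_nonneg _)
    split_ifs with h
    · by_cases h' : n ≤ N
      · rw [hb N n h h', norm_mul, norm_mul]
        gcongr
        · exact hC' _
        · exact hD' _
        · exact hD' _
      · rw [qb_of_lt _ _ _ (by omega), norm_zero]; positivity
    · rw [norm_zero]; positivity

noncomputable def be (p z : ℂ) : ℂ := ∑' n : ℤ, p^(2*n^2) * z^(2*n)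
noncomputable def ga (p z : ℂ) : ℂ := ∑' n : ℤ, p^(2*n^2+2*n) * z^(2*n)

lemma summable_be (p z : ℂ) (hp0 : p ≠ 0) (hp : ‖p‖ < 1) (hz : z ≠ 0) :
    Summable fun n : ℤ => p^(2*n^2) * z^(2*n) := by
  have hQ : ‖p^2‖ < 1 := by rw [norm_pow]; exact pow_lt_one₀ (norm_nonneg _) hp (by omega)
  refine (summable_theta (p^2) (z^2) (by simp [hp0]) hQ (by simp [hz])).congr fun n => ?_
  rw [zpow_mul, zpow_mul]; norm_cast

lemma summable_ga (p z : ℂ) (hp0 : p ≠ 0) (hp : ‖p‖ < 1) (hz : z ≠ 0) :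
    Summable fun n : ℤ => p^(2*n^2+2*n) * z^(2*n) := by
  refine (summable_be p (p * z) hp0 hp (by simp [hp0, hz])).congr fun n => ?_
  rw [zpow_add₀ hp0, mul_zpow]; ring

lemma tsum_parity (F : ℤ × ℤ → ℂ) (hF : Summable F) :
    ∑' x, F x = ∑' x : ℤ × ℤ, F (x.1 + x.2, x.1 - x.2) + ∑' x : ℤ × ℤ, F (x.1 + x.2 + 1, x.1 - x.2) := by
  have i1 : Function.Injective (fun x : ℤ × ℤ => (x.1 + x.2, x.1 - x.2)) := by
    rintro ⟨a, b⟩ ⟨c, d⟩ h; simp at h ⊢; omega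
  have i2 : Function.Injective (fun x : ℤ × ℤ => (x.1 + x.2 + 1, x.1 - x.2)) := by
    rintro ⟨a, b⟩ ⟨c, d⟩ h; simp at h ⊢; omega
  have hc : IsCompl (Set.range (fun x : ℤ × ℤ => (x.1 + x.2, x.1 - x.2)))
      (Set.range (fun x : ℤ × ℤ => (x.1 + x.2 + 1, x.1 - x.2))) := by
    refine ⟨Set.disjoint_left.2 ?_, codisjoint_iff.2 (Set.eq_univ_of_forall ?_)⟩
    · rintro _ ⟨⟨a, b⟩, rfl⟩ ⟨⟨c, d⟩, h⟩
      simp at h; omega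
    · rintro ⟨m, n⟩
      rcases Int.even_or_odd' (m - n) with ⟨k, hk | hk⟩
      · exact Or.inl ⟨(m - k, k), by simp; omega⟩
      · exact Or.inr ⟨(m - k - 1, k), by simp; omega⟩
  have s1 := (hF.comp_injective i1).hasSum
  have s2 := (hF.comp_injective i2).hasSum
  exact (HasSum.add_isCompl hc (i1.hasSum_range_iff.2 s1) (i2.hasSum_range_iff.2 s2)).tsum_eq

lemma th_mul (p z y : ℂ) (hp0 : p ≠ 0) (hp : ‖p‖ < 1) (hz : z ≠ 0) (hy : y ≠ 0) :
    th p (z*y) * th p (z/y) = be p z * be p y + p * z * y * (ga p z * ga p y) := by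
  have a1 := (summable_theta p (z*y) hp0 hp (by simp [hz, hy])).norm
  have a2 := (summable_theta p (z/y) hp0 hp (by simp [hz, hy])).norm
  have b1 := (summable_be p z hp0 hp hz).norm
  have b2 := (summable_be p y hp0 hp hy).norm
  have c1 := (summable_ga p z hp0 hp hz).norm
  have c2 := (summable_ga p y hp0 hp hy).norm
  rw [th, th, be, be, ga, ga, tsum_mul_tsum_of_summable_norm a1 a2,
    tsum_mul_tsum_of_summable_norm b1 b2, tsum_mul_tsum_of_summable_norm c1 c2, ← tsum_mul_left,
    tsum_parity _ (summable_mul_of_summable_norm a1 a2)]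
  congr 1
  · refine tsum_congr fun x => ?_
    rw [show 2 * x.1^2 = (x.1+x.2)^2 + (x.1-x.2)^2 - 2*x.2^2 by ring, zpow_sub₀ hp0, zpow_add₀ hp0,
      show 2 * x.1 = (x.1 + x.2) + (x.1 - x.2) by ring, 
      show 2 * x.2 = (x.1 + x.2) - (x.1 - x.2) by ring, zpow_add₀ hz, zpow_sub₀ hy, mul_zpow, div_zpow]
    have : p^(2*x.2^2) ≠ 0 := zpow_ne_zero _ hp0
    field_simp
  · refine tsum_congr fun x => ?_
    have e1 : p^((x.1+x.2+1)^2) * p^((x.1-x.2)^2) = p * (p^(2*x.1^2+2*x.1) * p^(2*x.2^2+2*x.2)) := by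
      nth_rewrite 3 [← zpow_one p]
      simp only [← zpow_add₀ hp0]
      congr 1; ring
    have e2 : z^(x.1+x.2+1) * z^(x.1-x.2) = z * z^(2*x.1) := by
      nth_rewrite 3 [← zpow_one z]
      simp only [← zpow_add₀ hz]
      congr 1; ring
    have e3 : y^(x.1+x.2+1) / y^(x.1-x.2) = y * y^(2*x.2) := by
      nth_rewrite 3 [← zpow_one y]
      simp only [← zpow_add₀ hy, ← zpow_sub₀ hy]
      congr 1; ring
    rw [mul_zpow, div_zpow]
    calc _ = (p^((x.1+x.2+1)^2) * p^((x.1-x.2)^2)) * (z^(x.1+x.2+1) * z^(x.1-x.2)) * 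
          (y^(x.1+x.2+1) / y^(x.1-x.2)) := by ring
      _ = _ := by rw [e1, e2, e3]; ring
      
lemma be_shift (p x : ℂ) (hp0 : p ≠ 0) (hx : x ≠ 0) : be p (-x/p) = x^2 * ga p x := by
  rw [be, ga, ← tsum_mul_left, ← (Equiv.addRight (1:ℤ)).tsum_eq]
  refine tsum_congr fun n => ?_
  simp only [Equiv.coe_addRight]
  rw [div_zpow, Even.neg_zpow ⟨n+1, by ring⟩, show 2*(n+1)^2 = (2*n^2+2*n) + 2*(n+1) by ring, zpow_add₀ hp0,
    show x^(2*(n+1)) = x^(2*n) * x^2 by rw [mul_add, zpow_add₀ hx]; norm_cast]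
  have : p^(2*(n+1)) ≠ 0 := zpow_ne_zero _ hp0
  field_simp

lemma ga_shift (p x : ℂ) (hp0 : p ≠ 0)  : ga p (-x/p) = be p x := by
  rw [be, ga]
  refine tsum_congr fun n => ?_
  rw [div_zpow, Even.neg_zpow ⟨n, by ring⟩, zpow_add₀ hp0]
  have : p^(2*n) ≠ 0 := zpow_ne_zero _ hp0
  field_simp

noncomputable def qP (Q x : ℂ) : ℂ := qA Q x * qA Q (Q/x)

lemma qP_th (p x : ℂ) (hp0 : p ≠ 0) (hp : ‖p‖ < 1) (hx : x ≠ 0) :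
    th p (-x/p) = qA (p^2) (p^2) * qP (p^2) x := by
  rw [jtp p _ hp0 hp (by simp [hx, hp0]), qP]
  congr 3 <;> field_simp

/-- Weierstrass three-term relation -/
lemma plucker (p x y e : ℂ) (hp0 : p ≠ 0) (hp : ‖p‖ < 1) (hx : x ≠ 0) (hy : y ≠ 0) (he : e ≠ 0) :
    y * (qP (p^2) (x*y) * qP (p^2) (x/y)) * qP (p^2) e ^2 =
    e * (qP (p^2) (x*e) * qP (p^2) (x/e) * qP (p^2) y ^2 - qP (p^2) (y*e) * qP (p^2) (y/e) * qP (p^2) x ^2) := by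
  have hQ : ‖p^2‖ < 1 := by rw [norm_pow]; exact pow_lt_one₀ (norm_nonneg _) hp (by omega)
  have hC := qA_self_ne (p^2) hQ
  have W : ∀ x y : ℂ, x ≠ 0 → y ≠ 0 → qA (p^2) (p^2) ^2 * (qP (p^2) (x*y) * qP (p^2) (x/y)) =
      x * (x * ga p x * be p y - be p x * (y * ga p y)) := by
    intro x y hx hy
    have h := th_mul p (-x/p) y hp0 hp (by simp [hx, hp0]) hy
    rw [be_shift p x hp0 hx, ga_shift p x hp0, show -x/p*y = -(x*y)/p by ring,
      show -x/p/y = -(x/y)/p by ring, qP_th _ _ hp0 hp (by simp [hx, hy]),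
      qP_th _ _ hp0 hp (by simp [hx, hy])] at h
    have : p * (-x/p) = -x := by field_simp
    rw [this] at h
    linear_combination h
  have h1 := W x y hx hy
  have h2 := W e 1 he one_ne_zero
  have h3 := W x e hx he
  have h4 := W y 1 hy one_ne_zero
  have h5 := W y e hy he
  have h6 := W x 1 hx one_ne_zero
  simp only [mul_one, div_one, ← pow_two] at h2 h4 h6
  apply mul_left_cancel₀ (pow_ne_zero 4 hC)
  generalize qA (p^2) (p^2) = C at *
  calc _ = y * (C^2 * (qP (p^2) (x*y) * qP (p^2) (x/y))) * (C^2 * qP (p^2) e ^2) := by ring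
    _ = e * ((C^2 * (qP (p^2) (x*e) * qP (p^2) (x/e))) * (C^2 * qP (p^2) y ^2)
       - (C^2 * (qP (p^2) (y*e) * qP (p^2) (y/e))) * (C^2 * qP (p^2) x ^2)) := by
      rw [h1, h2, h3, h4, h5, h6]; ring
    _ = _ := by ring


noncomputable def Gf (c : ℕ → ℂ) (s : ℂ) : ℂ := ∏' n : ℕ, (1 + s * c n)

lemma mult_Gf (c : ℕ → ℂ) (hc : Summable fun n => ‖c n‖) (s : ℂ) :
    Multipliable fun n : ℕ => 1 + s * c n :=
  multipliable_one_add_of_summable (by simpa using hc.mul_left ‖s‖)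

lemma hasDerivAt_Gf (c : ℕ → ℂ) (hc : Summable fun n => ‖c n‖) :
    HasDerivAt (Gf c) (∑' n, c n) 0 := by
  have hm : MultipliableLocallyUniformlyOn (fun n s => 1 + s * c n) (Metric.ball (0:ℂ) 1) := by
    use Gf c
    apply hasProdLocallyUniformlyOn_of_forall_compact Metric.isOpen_ball
    intro K hK hcK
    refine hc.hasProdUniformlyOn_nat_one_add hcK (.of_forall fun n x hx ↦ ?_) (fun _ ↦ by fun_prop)
    have := hK hx
    simp at this
    rw [norm_mul]
    nlinarith [norm_nonneg (c n)]
  have h0 : (0:ℂ) ∈ Metric.ball (0:ℂ) 1 := by simp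
  have hd : DifferentiableOn ℂ (Gf c) (Metric.ball (0:ℂ) 1) :=
    hm.hasProdLocallyUniformlyOn.differentiableOn
    (.of_forall fun _ ↦ by simpa [Finset.prod_fn] using!
      DifferentiableOn.finsetProd (fun _ _ ↦ by fun_prop)) Metric.isOpen_ball
  have hl : ∀ n, logDeriv (fun s => 1 + s * c n) 0 = c n := by
    intro n
    rw [logDeriv_apply]
    have : HasDerivAt (fun s => 1 + s * c n) (c n) 0 := by
      simpa using ((hasDerivAt_id (0:ℂ)).mul_const (c n)).const_add 1
    rw [this.deriv]; simp
  have := logDeriv_tprod_eq_tsum Metric.isOpen_ball h0 (f := fun n s => 1 + s * c n)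
    (by simp) (by fun_prop) (by simpa [hl] using hc.of_norm) hm (by simp)
  simp only [hl] at this
  have h1 : Gf c 0 = 1 := by simp [Gf]
  rw [logDeriv_apply] at this
  change deriv (Gf c) 0 / Gf c 0 = _ at this
  rw [h1, div_one] at this
  rw [← this]
  exact (hd.differentiableAt (Metric.isOpen_ball.mem_nhds h0)).hasDerivAt

noncomputable def lc (Q x : ℂ) (n : ℕ) : ℂ := x * Q^n / (1 - x * Q^n)^2

lemma summable_lc (Q x : ℂ) (hQ : ‖Q‖ < 1) : Summable fun n => ‖lc Q x n‖ := by
  have h0 : Tendsto (fun n : ℕ => x * Q^n) atTop (𝓝 0) := by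
    simpa using (tendsto_pow_atTop_nhds_zero_of_norm_lt_one hQ).const_mul x
  have h1 : Tendsto (fun n : ℕ => ((1 - x * Q^n)^2)⁻¹) atTop (𝓝 1) := by
    simpa using ((h0.const_sub 1).pow 2).inv₀ (by simp)
  obtain ⟨C, hC⟩ := (Metric.isBounded_range_of_tendsto _ h1).exists_norm_le
  have hs := summable_norm_xQ Q x hQ
  refine (hs.mul_right C).of_nonneg_of_le (fun _ => norm_nonneg _) fun n => ?_
  rw [lc, div_eq_mul_inv, norm_mul, norm_neg]
  exact mul_le_mul_of_nonneg_left (hC _ ⟨n, rfl⟩) (norm_nonneg _)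

lemma qA_pair (Q x e s : ℂ) (hQ : ‖Q‖ < 1) (h : ∀ n : ℕ, 1 - x * Q^n ≠ 0) (he : e ≠ 0)
    (hs : s * e = -(1-e)^2) : qA Q (x*e) * qA Q (x/e) = qA Q x ^2 * Gf (lc Q x) s := by
  rw [qA, qA, ← (mult_qA Q _ hQ).tprod_mul (mult_qA Q _ hQ), qA, ← (mult_qA Q _ hQ).tprod_pow,
    Gf, ← ((mult_qA Q _ hQ).pow 2).tprod_mul (mult_Gf _ (summable_lc Q x hQ) s)]
  refine tprod_congr fun n => ?_
  have hs' : s = -(1-e)^2/e := by field_simp; exact hs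
  rw [lc, hs']
  have := h n
  field_simp
  ring

lemma qA_shift (Q x : ℂ) (hQ : ‖Q‖ < 1) : qA Q x = (1 - x) * qA Q (x*Q) := by
  refine tendsto_nhds_unique ((tendsto_add_atTop_iff_nat 1).2 (tendsto_qA Q x hQ)) ?_
  refine ((tendsto_qA Q (x*Q) hQ).const_mul (1-x)).congr fun N => ?_
  rw [Finset.prod_range_succ', mul_comm]
  congr 1
  · exact Finset.prod_congr rfl fun k _ => by ring
  · simp

lemma lambert_id (p x y : ℂ) (hp0 : p ≠ 0) (hp : ‖p‖ < 1) (hx : x ≠ 0) (hy : y ≠ 0) 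
    (x1 : ∀ n : ℕ, 1 - x * (p^2)^n ≠ 0) (x2 : ∀ n : ℕ, 1 - p^2/x * (p^2)^n ≠ 0)
    (y1 : ∀ n : ℕ, 1 - y * (p^2)^n ≠ 0) (y2 : ∀ n : ℕ, 1 - p^2/y * (p^2)^n ≠ 0) :
    -y * (qP (p^2) (x*y) * qP (p^2) (x/y)) * qA (p^2) (p^2) ^ 4 = 
      qP (p^2) x ^2 * qP (p^2) y ^2 * 
        ((∑' n, lc (p^2) x n + ∑' n, lc (p^2) (p^2/x) n) - (∑' n, lc (p^2) y n + ∑' n, lc (p^2) (p^2/y) n)) := by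
  have hQ : ‖p^2‖ < 1 := by rw [norm_pow]; exact pow_lt_one₀ (norm_nonneg _) hp (by omega)
  have pl := fun e he => plucker p x y e hp0 hp hx hy he
  have hQ0 : p^2 ≠ 0 := by simp [hp0]
  generalize p^2 = Q at *
  have z1 : ∀ n : ℕ, 1 - Q * Q^n ≠ 0 := fun n => by rw [← pow_succ']; exact one_sub_pow_ne Q hQ n
  have pair : ∀ x e s : ℂ, x ≠ 0 → e ≠ 0 → s * e = -(1-e)^2 → (∀ n : ℕ, 1 - x * Q^n ≠ 0) → 
      (∀ n : ℕ, 1 - Q/x * Q^n ≠ 0) →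
      qP Q (x*e) * qP Q (x/e) = qP Q x ^2 * (Gf (lc Q x) s * Gf (lc Q (Q/x)) s) := by
    intro x e s hx he hs h1 h2
    have a1 := qA_pair Q x e s hQ h1 he hs
    have a2 := qA_pair Q (Q/x) e s hQ h2 he hs
    rw [qP, qP, qP, show Q/(x*e) = Q/x/e by field_simp, show Q/(x/e) = Q/x*e by field_simp]
    calc _ = (qA Q (x*e) * qA Q (x/e)) * (qA Q (Q/x*e) * qA Q (Q/x/e)) := by ring
      _ = _ := by rw [a1, a2]; ring
  have key : ∀ s : ℂ, (-y * (qP Q (x*y) * qP Q (x/y)) * qA Q Q ^4) * (s * Gf (lc Q Q) s ^2) = 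
     (qP Q x ^2 * qP Q y ^2) * 
      (Gf (lc Q x) s * Gf (lc Q (Q/x)) s - Gf (lc Q y) s * Gf (lc Q (Q/y)) s) := by
    intro s
    obtain ⟨r, hr⟩ := IsAlgClosed.exists_pow_nat_eq ((2-s)^2-4) (n := 2) (by norm_num)
    obtain ⟨e, he⟩ : ∃ e, e = ((2-s)+r)/2 := ⟨_, rfl⟩
    have he1 : e * (((2-s)-r)/2) = 1 := by rw [he]; linear_combination -hr/4
    have he0 : e ≠ 0 := left_ne_zero_of_mul_eq_one he1
    have hs : s * e = -(1-e)^2 := by rw [he]; linear_combination hr/4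
    have h := pl e he0
    rw [pair x e s hx he0 hs x1 x2, pair y e s hy he0 hs y1 y2] at h
    have h2 := qA_pair Q Q e s hQ z1 he0 hs
    have h3 : qP Q e = (1-e) * (qA Q Q ^2 * Gf (lc Q Q) s) := by
      rw [← h2, qP, qA_shift Q e hQ, mul_comm Q e]; ring
    rw [h3] at h
    apply mul_left_cancel₀ he0
    linear_combination h - y * (qP Q (x*y) * qP Q (x/y)) * qA Q Q ^4 * Gf (lc Q Q) s ^2 * hs
  have d := fun x => hasDerivAt_Gf (lc Q x) (summable_lc Q x hQ)
  have g0 : ∀ c, Gf c 0 = 1 := by simp [Gf]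
  have D1 := (((hasDerivAt_id (0:ℂ)).mul ((d Q).pow 2)).const_mul 
    (-y * (qP Q (x*y) * qP Q (x/y)) * qA Q Q ^4))
  have D2 := ((((d x).mul (d (Q/x))).sub ((d y).mul (d (Q/y)))).const_mul (qP Q x ^2 * qP Q y ^2))
  have D3 := D1.unique (D2.congr_of_eventuallyEq (Eventually.of_forall key))
  simpa [g0, add_comm] using D3


lemma norm_pow_lt (q : ℂ) (hq : ‖q‖ < 1) (k : ℕ) (hk : k ≠ 0) : ‖q^k‖ < 1 := by
  rw [norm_pow]; exact pow_lt_one₀ (norm_nonneg _) hq hk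

lemma one_sub_ne (x : ℂ) (hx : ‖x‖ < 1) : 1 - x ≠ 0 := by
  intro h
  rw [← sub_eq_zero.1 h] at hx; simp at hx

lemma qA_split3 (q x : ℂ) (hq : ‖q‖ < 1) :
    qA q x = qA (q^3) x * qA (q^3) (x*q) * qA (q^3) (x*q^2) := by
  have h3 := norm_pow_lt q hq 3 (by norm_num)
  have t3 : Tendsto (fun N : ℕ => 3*N) atTop atTop :=
    tendsto_atTop.2 fun b => by filter_upwards [eventually_ge_atTop b] with N hN; omega
  refine tendsto_nhds_unique ((tendsto_qA q x hq).comp t3) ?_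
  refine (((tendsto_qA (q^3) x h3).mul (tendsto_qA (q^3) (x*q) h3)).mul 
    (tendsto_qA (q^3) (x*q^2) h3)).congr fun N => ?_
  simp only [Function.comp]
  induction N with
  | zero => simp
  | succ N ih =>
    rw [show 3*(N+1) = 3*N+1+1+1 by ring]
    simp only [Finset.prod_range_succ] at ih ⊢
    rw [← ih]; ring

lemma tsum_lc_split3 (q x : ℂ) (hq : ‖q‖ < 1) :
    ∑' n, lc q x n = ∑' n, lc (q^3) x n + ∑' n, lc (q^3) (x*q) n + ∑' n, lc (q^3) (x*q^2) n := by
  have h3 := norm_pow_lt q hq 3 (by norm_num)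
  have t3 : Tendsto (fun N : ℕ => 3*N) atTop atTop :=
    tendsto_atTop.2 fun b => by filter_upwards [eventually_ge_atTop b] with N hN; omega
  have T := fun q hq x => (summable_lc q x hq).of_norm.hasSum.tendsto_sum_nat
  refine tendsto_nhds_unique ((T q hq x).comp t3) ?_
  refine (((T (q^3) h3 x).add (T (q^3) h3 (x*q))).add (T (q^3) h3 (x*q^2))).congr fun N => ?_
  simp only [Function.comp]
  induction N with
  | zero => simp
  | succ N ih =>
    rw [show 3*(N+1) = 3*N+1+1+1 by ring]
    simp only [Finset.sum_range_succ] at ih ⊢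
    rw [← ih]
    have e1 : lc q x (3*N) = lc (q^3) x N := by simp only [lc]; congr 1 <;> ring
    have e2 : lc q x (3*N+1) = lc (q^3) (x*q) N := by simp only [lc]; congr 1 <;> ring
    have e3 : lc q x (3*N+1+1) = lc (q^3) (x*q^2) N := by simp only [lc]; congr 1 <;> ring
    rw [e1, e2, e3]; ring

lemma qA_roots (w Q x : ℂ) (hw : w^2+w+1 = 0) (hQ : ‖Q‖ < 1) :
    qA Q x * qA Q (w*x) * qA Q (w^2*x) = qA (Q^3) (x^3) := by
  have m := fun x => mult_qA Q x hQ
  have w3 : w^3 = 1 := by linear_combination (w-1)*hw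
  simp only [qA]
  rw [← (m _).tprod_mul (m _), ← ((m _).mul (m _)).tprod_mul (m _)]
  refine tprod_congr fun n => ?_
  rw [show x^3 * (Q^3)^n = (x * Q^n)^3 by ring]
  generalize hu : x * Q^n = u
  rw [mul_assoc w, mul_assoc (w^2), hu]
  linear_combination (-u + u^2*w) * hw - u^3 * w3

lemma tsum_lc_shift (Q x : ℂ) (hQ : ‖Q‖ < 1) :
    ∑' n, lc Q x n = x/(1-x)^2 + ∑' n, lc Q (x*Q) n := by
  rw [(summable_lc Q x hQ).of_norm.tsum_eq_zero_add]
  congr 1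
  · simp [lc]
  · refine tsum_congr fun n => ?_
    simp only [lc]; congr 1 <;> ring

lemma tsum_lc_roots (w Q x : ℂ) (hw : w^2+w+1 = 0) (hQ : ‖Q‖ < 1) (hx : ‖x‖ < 1) :
    ∑' n, lc Q x n + ∑' n, lc Q (w*x) n + ∑' n, lc Q (w^2*x) n = 9 * ∑' n, lc (Q^3) (x^3) n := by
  have m := fun x => (summable_lc Q x hQ).of_norm
  have w3 : w^3 = 1 := by linear_combination (w-1)*hw
  have nw : ‖w‖ = 1 := by
    have := congrArg norm w3
    rw [norm_pow, norm_one] at this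
    exact (pow_eq_one_iff_of_nonneg (norm_nonneg _) (by norm_num)).1 this
  rw [← (m _).tsum_add (m _), ← ((m _).add (m _)).tsum_add (m _), ← tsum_mul_left]
  refine tsum_congr fun n => ?_
  simp only [lc]
  have hu1 : ‖x * Q^n‖ < 1 := by
    rw [norm_mul, norm_pow]
    exact (mul_le_of_le_one_right (norm_nonneg _) (pow_le_one₀ (norm_nonneg _) hQ.le)).trans_lt hx
  rw [show x^3 * (Q^3)^n = (x * Q^n)^3 by ring]
  rw [mul_assoc w, mul_assoc (w^2)]
  generalize x * Q^n = u at *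
  have a1 : 1 - u ≠ 0 := one_sub_ne _ hu1
  have a2 : 1 - w*u ≠ 0 := one_sub_ne _ (by simpa [nw] using hu1)
  have a3 : 1 - w^2*u ≠ 0 := one_sub_ne _ (by simpa [nw] using hu1)
  have a4 : 1 - u^3 ≠ 0 := one_sub_ne _ (norm_pow_lt _ hu1 3 (by norm_num))
  have f : 1 - u^3 = (1-u)*(1-w*u)*(1-w^2*u) := by
    linear_combination (u - u^2*w) * hw + u^3 * w3
  have w2 : w^2 = -1 - w := by linear_combination hw
  have hw' : (1-w*u)*(1-w^2*u) = 1+u+u^2 := by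
    linear_combination (-u) * hw + u^2 * w3
  have key : w*u/(1-w*u)^2 + w^2*u/(1-w^2*u)^2 = (w*u*(1-w^2*u)^2 + w^2*u*(1-w*u)^2)/(1+u+u^2)^2 := by
    rw [← hw']; field_simp
  have num : w*u*(1-w^2*u)^2 + w^2*u*(1-w*u)^2 = -u - 4*u^2 - u^3 := by
    have w4 : w^4 = w := by linear_combination w * w3
    have w5 : w^5 = w^2 := by linear_combination w^2 * w3
    linear_combination (u) * hw - 4*u^2*w3 + u^3 * w5 + u^3 * w4 + u^3 * hw
  have b : 1+u+u^2 ≠ 0 := by rw [← hw']; exact mul_ne_zero a2 a3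
  rw [add_assoc, key, num, show 1 - u^3 = (1-u)*(1+u+u^2) by ring]
  field_simp
  ring

/-- The key Eisenstein-product identity. -/
lemma eis_id (r : ℂ) (hr0 : r ≠ 0) (hr : ‖r‖ < 1) (q : ℂ) (hq : q = r^2) :
    (1 + 3 * ∑' n, lc q q n - 27 * ∑' n, lc (q^9) (q^9) n) * qA q q ^3 * qA (q^9) (q^9) ^3 
      = qA (q^3) (q^3) ^ 10 := by
  obtain ⟨w, hw⟩ : ∃ w : ℂ, w^2+w+1 = 0 := by
    obtain ⟨s, hs⟩ := IsAlgClosed.exists_pow_nat_eq (-3 : ℂ) (n := 2) (by norm_num)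
    exact ⟨(-1+s)/2, by linear_combination hs/4⟩
  have w3 : w^3 = 1 := by linear_combination (w-1)*hw
  have w0 : w ≠ 0 := by rintro rfl; simp at hw
  have w1 : 1 - w ≠ 0 := by
    intro h
    have : w = 1 := (sub_eq_zero.1 h).symm
    rw [this] at hw; norm_num at hw
  have nw : ‖w‖ = 1 := by
    have := congrArg norm w3
    rw [norm_pow, norm_one] at this
    exact (pow_eq_one_iff_of_nonneg (norm_nonneg _) (by norm_num)).1 this
  have q0 : q ≠ 0 := by simp [hq, hr0]
  have hq1 : ‖q‖ < 1 := by rw [hq]; exact norm_pow_lt r hr 2 (by norm_num)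
  have hQ := norm_pow_lt q hq1 3 (by norm_num)
  have hp : (r^3)^2 = q^3 := by rw [hq]; ring
  have hlt : ∀ x : ℂ, ‖x‖ < 1 → ∀ n : ℕ, 1 - x * (q^3)^n ≠ 0 := by
    intro x hx n
    apply one_sub_ne
    rw [norm_mul, norm_pow]
    exact (mul_le_of_le_one_right (norm_nonneg _) (pow_le_one₀ (norm_nonneg _) hQ.le)).trans_lt hx
  have ew : q^3/w = w^2*q^3 := by field_simp; linear_combination -w3
  have eq : q^3/q = q*q := by field_simp
  have main := lambert_id (r^3) w q (by simp [hr0]) (norm_pow_lt r hr 3 (by norm_num)) w0 q0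
    (by
      rw [hp]; rintro (_|n)
      · simpa using w1
      · rw [pow_succ', ← mul_assoc]; exact hlt (w * q^3) (by rw [norm_mul, nw, one_mul]; exact hQ) n)
    (by rw [hp]; exact hlt _ (by rw [norm_div, nw, div_one]; exact hQ))
    (by rw [hp]; exact hlt _ hq1)
    (by rw [hp, eq, ← pow_two]; exact hlt _ (norm_pow_lt q hq1 2 (by norm_num)))
  rw [hp, ew, eq] at main
  have S1 := tsum_lc_split3 q q hq1
  have S2 := tsum_lc_roots w (q^3) (q^3) hw hQ hQ
  have S3 := tsum_lc_shift (q^3) w hQ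
  have e1 : w/(1-w)^2 = -1/3 := by
    rw [show (1-w)^2 = -3*w by linear_combination hw]; field_simp
  have h99 : (q^3)^3 = q^9 := by ring
  rw [show q*q^2 = q^3 by ring] at S1
  rw [e1] at S3
  rw [h99] at S2
  have Sfin : (∑' n, lc (q^3) w n + ∑' n, lc (q^3) (w^2*q^3) n) - (∑' n, lc (q^3) q n + ∑' n, lc (q^3) (q*q) n)
      = -(1 + 3 * ∑' n, lc q q n - 27 * ∑' n, lc (q^9) (q^9) n)/3 := by
    linear_combination S3 + S2 + S1
  rw [Sfin] at main
  -- products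
  have P1 := qA_split3 q q hq1
  rw [show q*q^2 = q^3 by ring] at P1
  have P2 := qA_roots w (q^3) (q^3) hw hQ
  have P3 := qA_shift (q^3) w hQ
  have P4 := qA_roots w (q^3) q hw hQ
  have P5 := qA_roots w (q^3) (q*q) hw hQ
  have P6 := qA_split3 (q^3) (q^3) hQ
  have P7 := qA_shift (q^3) (w/q) hQ
  have P8 := qA_shift (q^3) (w^2*q) hQ
  rw [h99] at P2 P4 P5 P6
  rw [show q^3*(q^3)^2 = q^9 by ring, show q^3*q^3=(q*q)^3 by ring, ← P4, ← P5] at P6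
  rw [show w/q*q^3 = w*(q*q) by field_simp] at P7
  simp only [qP] at main
  rw [ew, eq, show q^3/(w*q) = w^2*(q*q) by field_simp; linear_combination -w3,
    show q^3/(w/q) = w^2*q*q^3 by field_simp; linear_combination -w3] at main
  have n1 := qA_self_ne q hq1
  have n3 := qA_self_ne (q^3) hQ
  have n9 := qA_self_ne (q^9) (norm_pow_lt q hq1 9 (by norm_num))
  have n8 : 1 - w^2*q ≠ 0 := one_sub_ne _ (by simpa [nw] using hq1)
  have P9 : (1 - w/q) = -w/q * (1 - w^2*q) := by field_simp; linear_combination -q * w3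
  rw [P9] at P7
  rw [P7, P3] at main
  rw [P8] at P6
  generalize 1 + 3 * ∑' n, lc q q n - 27 * ∑' n, lc (q^9) (q^9) n = E at *
  generalize qA (q^3) (w*q^3) = a1 at *
  generalize qA (q^3) (w^2*q^3) = a2 at *
  generalize qA (q^3) (w*(q*q)) = b1 at *
  generalize qA (q^3) (w^2*(q*q)) = b2 at *
  generalize qA (q^3) (w^2*q*q^3) = b3 at *
  generalize qA (q^3) (w*q) = b4 at *
  generalize qA (q^3) (q*q) = c2 at *
  generalize qA (q^3) q = c1 at *
  generalize qA (q^3) (q^3) = f3 at *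
  generalize qA (q^9) (q^9) = f9 at *
  generalize qA q q = f1 at *
  clear P3 P4 P5 P7 P8 P9 S1 S2 S3 Sfin
  generalize 1 - w^2*q = k at *
  have main2 : w * k * (b4 * b2 * b1 * b3) * f3^4 = w * (a1 * a2 * c1 * c2)^2 * E := by
    have hw' : (1-w)^2 = -3*w := by linear_combination hw
    have : -q * (b4 * b2 * (-w / q * k * b1 * b3)) = w * k * (b4 * b2 * b1 * b3) := by field_simp
    linear_combination main - f3^4 * this + (a1*a2*c1*c2)^2*(-E/3) * hw'
  have main3 : k * (b4 * b2 * b1 * b3) * f3^4 = (a1 * a2 * c1 * c2)^2 * E :=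
    mul_left_cancel₀ w0 (by linear_combination main2)
  have f3' : f3 * f3 = (c1*c2*f3) * (k*(b4*b2*b1*b3)) * f9 := by linear_combination f3 * P6
  rw [← P1] at f3'
  have m4 : f3^4 * f3^2 * f3^4 = f1 * f9 * ((a1*a2*f3)*(c1*c2*f3))^2 * E := by
    linear_combination f3^4 * f1*f9* main3 + f3^8 * f3'
  rw [← P1, show a1*a2*f3 = f9 by linear_combination P2] at m4
  linear_combination -m4

lemma lambert_swap (t : ℂ) (ht : ‖t‖ < 1) :
    ∑' n : ℕ, (n+1 : ℂ) * t^(n+1) / (1 - t^(n+1)) = ∑' n, lc t t n := by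
  have h1 := tsum_pow_div_one_sub_eq_tsum_sigma ht 1
  rw [← tsum_prod_pow_eq_tsum_sigma 1 ht] at h1
  have h2 : ∀ d : ℕ+, ∑' c : ℕ+, (c:ℂ)^1 * t^(d*c:ℕ) = t^(d:ℕ) / (1 - t^(d:ℕ))^2 := by
    intro d
    rw [← tsum_coe_mul_geometric_of_norm_lt_one (norm_pow_lt t ht d d.ne_zero)]
    rw [← tsum_zero_pnat_eq_tsum_nat]
    · simp [pow_mul]
    · have := summable_pow_mul_geometric_of_norm_lt_one 1 (norm_pow_lt t ht d d.ne_zero)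
      simpa using this
  simp only [h2] at h1
  have e1 := tsum_pnat_eq_tsum_succ (f := fun n : ℕ => (n:ℂ)^1 * t^n / (1 - t^n))
  have e2 := tsum_pnat_eq_tsum_succ (f := fun n : ℕ => t^n / (1 - t^n)^2)
  rw [e1, e2] at h1
  simp only [pow_one, Nat.cast_add, Nat.cast_one] at h1
  rw [h1]
  exact tsum_congr fun n => by simp only [lc]; rw [pow_succ']

lemma qA_self_eq (t : ℂ) : qA t t = ∏' n : ℕ, (1 - t^(n+1)) := by
  rw [qA]; exact tprod_congr fun n => by rw [pow_succ']

lemma qA_deriv (t : ℂ) (ht0 : t ≠ 0) (ht : ‖t‖ < 1) :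
    ∃ D, HasDerivAt (fun t => qA t t) D t ∧ t * D = -(∑' n, lc t t n) * qA t t := by
  have hmem : t ∈ Metric.ball (0:ℂ) 1 := by simpa using ht
  have hd : DifferentiableAt ℂ (fun t => qA t t) t := by
    simp only [qA_self_eq]
    exact ModularForm.differentiableOn_tprod_one_sub_pow.differentiableAt (Metric.isOpen_ball.mem_nhds hmem)
  refine ⟨_, hd.hasDerivAt, ?_⟩
  have hl : ∀ n : ℕ, logDeriv (fun t : ℂ => 1 - t^(n+1)) t = -t⁻¹ * ((n+1 : ℂ) * t^(n+1) / (1 - t^(n+1))) := by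
    intro n
    rw [logDeriv_apply]
    have : HasDerivAt (fun t : ℂ => 1 - t^(n+1)) (-((n+1 : ℕ) * t^n)) t := by
      simpa using (hasDerivAt_pow (n+1) t).const_sub 1
    rw [this.deriv]
    have := one_sub_pow_ne t ht n
    push_cast
    field_simp
    ring
  have hs := summable_norm_pow_mul_geometric_div_one_sub 1 ht
  have hs2 := ((summable_nat_add_iff 1).2 hs)
  simp only [pow_one, Nat.cast_add, Nat.cast_one] at hs2
  have key := logDeriv_tprod_eq_tsum Metric.isOpen_ball hmem (f := fun n t => 1 - t^(n+1))
    (fun n => one_sub_pow_ne t ht n) (by fun_prop) 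
    (by simp only [hl]; exact hs2.mul_left _)
    ModularForm.multipliableLocallyUniformlyOn_one_sub_pow (by rw [← qA_self_eq]; exact qA_self_ne t ht)
  simp only [hl, ← qA_self_eq] at key
  rw [tsum_mul_left, lambert_swap t ht, logDeriv_apply] at key
  have := qA_self_ne t ht
  field_simp at key
  linear_combination key

noncomputable def Vc (t : ℂ) : ℂ := t * (qA (t^9) (t^9) ^3 / qA t t ^3)
noncomputable def Uc (t : ℂ) : ℂ := qA (t^3) (t^3) ^10 / qA t t ^6

lemma Vc_deriv (r q : ℂ) (hr0 : r ≠ 0) (hr : ‖r‖ < 1) (hq : q = r^2) :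
    HasDerivAt Vc (Uc q) q := by
  have q0 : q ≠ 0 := by simp [hq, hr0]
  have hq1 : ‖q‖ < 1 := by rw [hq]; exact norm_pow_lt r hr 2 (by norm_num)
  obtain ⟨D, hD, eD⟩ := qA_deriv q q0 hq1
  obtain ⟨D9, hD9, eD9⟩ := qA_deriv (q^9) (by simp [q0]) (norm_pow_lt q hq1 9 (by norm_num))
  have E := eis_id r hr0 hr q hq
  have n1 := qA_self_ne q hq1
  have hc : HasDerivAt (fun t => qA (t^9) (t^9)) (D9 * (9 * q^8)) q := by
    have := HasDerivAt.comp (h₂ := fun t => qA t t) (h := fun t : ℂ => t^9) q hD9 (hasDerivAt_pow 9 q)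
    simpa [Function.comp_def] using this
  have := (hasDerivAt_id q).mul ((hc.pow 3).div (hD.pow 3) (pow_ne_zero 3 n1))
  refine this.congr_deriv ?_
  simp only [Uc, ← E, id, Pi.pow_apply, Pi.div_apply]
  have eD' : D = -(∑' n, lc q q n) * qA q q / q := by field_simp; linear_combination eD
  have eD9' : D9 = -(∑' n, lc (q^9) (q^9) n) * qA (q^9) (q^9) / q^9 := by field_simp; linear_combination eD9
  rw [eD', eD9']
  field_simp
  ring



lemma hasProd_quot (t : ℝ) (ht : |t| < 1) (a m k : ℕ) (ha : a ≠ 0) :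
    ∏' n : ℕ, (1 - t^(a*(n+1)))^m / (1 - t^(n+1))^k = 
      (qA ((t:ℂ)^a) ((t:ℂ)^a) ^m / qA (t:ℂ) (t:ℂ) ^k).re := by
  have h1 : ‖(t:ℂ)‖ < 1 := by simpa using ht
  have ha1 := norm_pow_lt _ h1 a ha
  have p1 := ((mult_qA ((t:ℂ)^a) ((t:ℂ)^a) ha1).pow m).hasProd
  have p2 := ((mult_qA (t:ℂ) (t:ℂ) h1).pow k).hasProd
  rw [(mult_qA _ _ ha1).tprod_pow] at p1
  rw [(mult_qA _ _ h1).tprod_pow] at p2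
  apply HasProd.tprod_eq
  have := Filter.Tendsto.div p1 p2 (pow_ne_zero _ (qA_self_ne _ h1))
  have h3 := (Complex.continuous_re.tendsto _).comp this
  refine Filter.Tendsto.congr (fun s => ?_) h3
  simp only [Function.comp, Pi.div_apply]
  rw [← Finset.prod_div_distrib, ← Complex.ofReal_re (∏ n ∈ s, _)]
  congr 1
  push_cast
  refine Finset.prod_congr rfl fun n _ => ?_
  congr 2 <;> ring

lemma U5_eq (t : ℝ) (ht : |t| < 1) : U5 t = (Uc t).re := hasProd_quot t ht 3 10 6 (by norm_num)

lemma V5_eq (t : ℝ) (ht : |t| < 1) : V5 t = (Vc t).re := by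
  rw [V5, hasProd_quot t ht 9 3 3 (by norm_num), Vc, Complex.re_ofReal_mul]

lemma cont_qA : ContinuousOn (fun t : ℂ => qA t t) (Metric.ball 0 1) := by
  simp only [qA_self_eq]
  exact ModularForm.differentiableOn_tprod_one_sub_pow.continuousOn

lemma cont_qA_pow (q : ℝ) (hq : q < 1) (a : ℕ) (ha : a ≠ 0) :
    ContinuousOn (fun t : ℝ => qA ((t:ℂ)^a) ((t:ℂ)^a)) (Set.Icc 0 q) := by
  refine ContinuousOn.comp (g := fun t : ℂ => qA t t) (f := fun t : ℝ => (t:ℂ)^a) cont_qA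
    (by fun_prop) ?_
  intro t ht
  have : ‖(t:ℂ)‖ < 1 := by simpa [abs_of_nonneg ht.1] using ht.2.trans_lt hq
  simpa using norm_pow_lt _ this a ha

lemma part1 (q : ℝ) (h0 : 0 < q) (h1 : q < 1) : (∫ t in (0:ℝ)..q, U5 t) = V5 q := by
  have ab : ∀ t ∈ Set.Icc 0 q, |t| < 1 := fun t ht => by
    rw [abs_of_nonneg ht.1]; exact ht.2.trans_lt h1
  have nz : ∀ t ∈ Set.Icc 0 q, qA (t:ℂ) (t:ℂ) ≠ 0 := fun t ht =>
    qA_self_ne _ (by simpa using ab t ht)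
  have c1 := cont_qA_pow q h1 1 (by norm_num)
  simp only [pow_one] at c1
  have c3 := cont_qA_pow q h1 3 (by norm_num)
  have c9 := cont_qA_pow q h1 9 (by norm_num)
  have cU : ContinuousOn U5 (Set.Icc 0 q) := by
    refine ContinuousOn.congr (f := fun t : ℝ => (Uc t).re) ?_ fun t ht => U5_eq t (ab t ht)
    refine Complex.continuous_re.comp_continuousOn ?_
    exact (c3.pow 10).div (c1.pow 6) fun t ht => pow_ne_zero _ (nz t ht)
  have cV : ContinuousOn V5 (Set.Icc 0 q) := by
    refine ContinuousOn.congr (f := fun t : ℝ => (Vc t).re) ?_ fun t ht => V5_eq t (ab t ht)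
    refine Complex.continuous_re.comp_continuousOn ?_
    exact (Complex.continuous_ofReal.continuousOn).mul
      ((c9.pow 3).div (c1.pow 3) fun t ht => pow_ne_zero _ (nz t ht))
  rw [intervalIntegral.integral_eq_sub_of_hasDerivAt_of_le h0.le cV (f' := U5)]
  · simp [V5]
  · intro t ht
    have hd := Vc_deriv (√t : ℝ) (t:ℂ) 
      (by simpa using (Real.sqrt_pos.2 ht.1).ne')
      (by
        rw [Complex.norm_real, Real.norm_eq_abs, abs_of_nonneg (Real.sqrt_nonneg _), 
          Real.sqrt_lt' one_pos]
        simpa using ht.2.trans h1)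
      (by rw [← Complex.ofReal_pow, Real.sq_sqrt ht.1.le])
    rw [U5_eq t (ab t ⟨ht.1.le, ht.2.le⟩)]
    refine hd.real_of_complex.congr_of_eventuallyEq ?_
    filter_upwards [isOpen_Ioo.mem_nhds ht] with s hs
    exact V5_eq s (ab s ⟨hs.1.le, hs.2.le⟩)
  · apply ContinuousOn.intervalIntegrable
    rwa [Set.uIcc_of_le h0.le]

lemma part2 : V5 (Real.exp (-2 * Real.pi / 3)) = 1 / (3 * Real.sqrt 3) := by
  have hlt : |Real.exp (-2 * Real.pi / 3)| < 1 := by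
    rw [abs_of_pos (Real.exp_pos _), Real.exp_lt_one_iff]
    nlinarith [Real.pi_pos]
  rw [V5_eq _ hlt]
  set q : ℂ := ((Real.exp (-2 * Real.pi / 3) : ℝ) : ℂ) with hq
  have hq1 : ‖q‖ < 1 := by rw [hq, Complex.norm_real]; exact hlt
  have n1 := qA_self_ne q hq1
  have hI : ∀ c : ℝ, ModularForm.eta (c * Complex.I) = 
      Complex.exp (-2*π*c/24) * qA (Complex.exp (-2*π*c)) (Complex.exp (-2*π*c)) := by
    intro c
    rw [ModularForm.eta, qA_self_eq]
    simp only [ModularForm.eta_q_eq_pow, Function.Periodic.qParam]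
    have : 2 * π * Complex.I * (c * Complex.I) = -2 * π * c := by
      linear_combination 2 * π * c * Complex.I_mul_I
    rw [this]; norm_num
  have hS := ModularForm.eta_comp_eq_csqrt_I_inv (x := ((3:ℝ):ℂ) * Complex.I)
    (by simp [UpperHalfPlane.upperHalfPlaneSet])
  simp only [Function.comp, Pi.smul_apply, Pi.mul_apply, smul_eq_mul] at hS
  rw [show -1 / (((3:ℝ):ℂ) * Complex.I) = ((1/3:ℝ):ℂ) * Complex.I by
    push_cast; field_simp; simp, hI, hI] at hS
  have e1 : Complex.exp (-2*π*((1/3:ℝ):ℂ)) = q := by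
    rw [hq]; push_cast; congr 1; ring
  have e2 : Complex.exp (-2*π*((3:ℝ):ℂ)) = q^9 := by
    rw [hq]; push_cast; rw [← Complex.exp_nat_mul]; congr 1; push_cast; ring
  have e3 : Complex.sqrt (((3:ℝ):ℂ) * Complex.I) = ((√3:ℝ):ℂ) * Complex.sqrt Complex.I := by
    rw [_root_.sqrt_eq_exp (by simp), _root_.sqrt_eq_exp Complex.I_ne_zero,
      Complex.log_ofReal_mul (by norm_num) Complex.I_ne_zero, Real.sqrt_eq_rpow,
      Real.rpow_def_of_pos (by norm_num), Complex.ofReal_exp, ← Complex.exp_add]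
    congr 1; push_cast; ring
  have e4 : Complex.sqrt Complex.I ≠ 0 := by
    rw [_root_.sqrt_eq_exp Complex.I_ne_zero]; exact Complex.exp_ne_zero _
  rw [e1, e2, e3] at hS
  have hS' : Complex.exp (-2*π*((1/3:ℝ):ℂ)/24) * qA q q = 
      ((√3:ℝ):ℂ) * (Complex.exp (-2*π*((3:ℝ):ℂ)/24) * qA (q^9) (q^9)) := by
    rw [hS]; field_simp
  have h3 := congrArg (fun x => x^3) hS'
  simp only [mul_pow] at h3
  rw [← Complex.exp_nat_mul, ← Complex.exp_nat_mul] at h3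
  have e5 : Complex.exp ((3:ℕ) * (-2*π*((3:ℝ):ℂ)/24)) = q * Complex.exp ((3:ℕ) * (-2*π*((1/3:ℝ):ℂ)/24)) := by
    rw [← e1, ← Complex.exp_add]; congr 1; push_cast; ring
  rw [e5] at h3
  have s3 : ((√3:ℝ):ℂ)^3 = ((3 * √3 : ℝ) : ℂ) := by
    norm_cast
    rw [pow_succ, Real.sq_sqrt (by norm_num)]
  rw [s3] at h3
  have hx := Complex.exp_ne_zero ((3:ℕ) * (-2*π*((1/3:ℝ):ℂ)/24))
  have h4 : qA q q ^3 = ((3 * √3 : ℝ) : ℂ) * (q * qA (q^9) (q^9) ^3) := 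
    mul_left_cancel₀ hx (by linear_combination h3)
  have hr : ((3 * √3 : ℝ) : ℂ) ≠ 0 := by
    rw [Complex.ofReal_ne_zero]; positivity
  have : Vc q = ((1 / (3 * √3) : ℝ) : ℂ) := by
    rw [Vc, Complex.ofReal_div, Complex.ofReal_one]
    field_simp
    linear_combination -h4
  rw [this, Complex.ofReal_re]

theorem stmt_5 :
    (∀ q : ℝ, 0 < q → q < 1 → (∫ t in (0:ℝ)..q, U5 t) = V5 q) ∧
    V5 (Real.exp (-2 * Real.pi / 3)) = 1 / (3 * Real.sqrt 3) := by
  exact ⟨part1, part2⟩
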